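/- Let k ≥ 1 and let F_{χ²_k} denote the cumulative distribution function of the chi-squared distribution with k degrees of freedom, i.e., the distribution on [0,∞) with density x ↦ (2^{−k/2}/Γ(k/2)) x^{k/2 − 1} e^{−x/2}. Then for every δ with 0 < δ < 1, setting z = δ/k, one has F_{χ²_k}(δ) ≤ (z e^{1−z})^{k/2} < (e δ / k)^{k/2}. -/

import Mathlib

open MeasureTheory Real

/-- The chi-squared distribution with `k` degrees of freedom: the measure on `[0,∞)`
with Lebesgue density `x ↦ (2^{-k/2}/Γ(k/2)) x^{k/2-1} e^{-x/2}`. -/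
noncomputable def chiSqMeasure (k : ℕ) : Measure ℝ :=
  (volume.restrict (Set.Ici (0 : ℝ))).withDensity fun x =>
    ENNReal.ofReal
      ((2 : ℝ) ^ (-(k : ℝ) / 2) / Real.Gamma ((k : ℝ) / 2) *
        x ^ ((k : ℝ) / 2 - 1) * Real.exp (-x / 2))

/-- The cumulative distribution function `F_{χ²_k}(t)` of the chi-squared
distribution with `k` degrees of freedom. -/
noncomputable def chiSqCDF (k : ℕ) (t : ℝ) : ℝ :=
  (chiSqMeasure k (Set.Iic t)).toReal

/-!
The chi-squared distribution is the gamma distribution of shape `k / 2` and rate `1 / 2`. Tilting a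
gamma density by `exp (t * x)` gives a multiple of another gamma density, which yields the moment
generating function `(r / (r - t)) ^ a`. The upper bound is then the Chernoff bound on the lower
tail at the optimal parameter, the one for which the tilted distribution has mean `δ`; this
parameter is nonpositive exactly when `δ ≤ k`.
-/

open ProbabilityTheory

section Gamma

variable {a r t x : ℝ}

lemma gammaPDFReal_mul_exp (hr : 0 ≤ r) (ht : t < r) :
    gammaPDFReal a r x * exp (t * x) = (r / (r - t)) ^ a * gammaPDFReal a (r - t) x := by
  have hrt : 0 < r - t := sub_pos.mpr ht
  unfold gammaPDFReal
  split_ifs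
  · have exp_tilt : exp (-((r - t) * x)) = exp (-(r * x)) * exp (t * x) := by
      rw [← exp_add]
      ring_nf
    rw [exp_tilt, div_rpow hr hrt.le]
    field_simp
  · simp only [zero_mul, mul_zero]

lemma integral_gammaPDFReal_eq_one (ha : 0 < a) (hr : 0 < r) : ∫ x, gammaPDFReal a r x = 1 := by
  rw [integral_eq_lintegral_of_nonneg_ae (.of_forall (gammaPDFReal_nonneg ha hr)) (by fun_prop)]
  exact (ENNReal.toReal_eq_one_iff _).mpr (lintegral_gammaPDF_eq_one ha hr)

lemma integral_gammaMeasure_eq_integral_smul {E : Type*} [NormedAddCommGroup E] [NormedSpace ℝ E]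
    (ha : 0 < a) (hr : 0 < r) (f : ℝ → E) :
    ∫ x, f x ∂gammaMeasure a r = ∫ x, gammaPDFReal a r x • f x := by
  have measurable_pdf : Measurable (gammaPDF a r) :=
    (measurable_gammaPDFReal a r).ennreal_ofReal
  rw [gammaMeasure, integral_withDensity_eq_integral_toReal_smul measurable_pdf
    (.of_forall fun _ ↦ ENNReal.ofReal_lt_top)]
  refine integral_congr_ae (.of_forall fun x ↦ ?_)
  simp only [gammaPDF, ENNReal.toReal_ofReal (gammaPDFReal_nonneg ha hr x)]

lemma mgf_id_gammaMeasure (ha : 0 < a) (hr : 0 < r) (ht : t < r) :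
    mgf id (gammaMeasure a r) t = (r / (r - t)) ^ a := by
  simp only [mgf, id, integral_gammaMeasure_eq_integral_smul ha hr, smul_eq_mul,
    gammaPDFReal_mul_exp hr.le ht, integral_const_mul,
    integral_gammaPDFReal_eq_one ha (sub_pos.mpr ht), mul_one]

lemma integrable_exp_mul_gammaMeasure (ha : 0 < a) (hr : 0 < r) (ht : t < r) :
    Integrable (fun x ↦ exp (t * x)) (gammaMeasure a r) := by
  -- A non-integrable exponential would make the moment generating function take the value `0`.
  by_contra h
  have mgf_pos : 0 < (r / (r - t)) ^ a := rpow_pos_of_pos (div_pos hr (sub_pos.mpr ht)) a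
  exact mgf_pos.ne' ((mgf_id_gammaMeasure ha hr ht).symm.trans (mgf_undef h))

lemma cdf_gammaMeasure_le (ha : 0 < a) (hr : 0 < r) (hx : 0 < x) (hxa : r * x ≤ a) :
    cdf (gammaMeasure a r) x ≤ (r * x / a * exp (1 - r * x / a)) ^ a := by
  have := isProbabilityMeasure_gammaMeasure ha hr
  -- This `t` tilts the rate from `r` to `a / x`, for which the mean is `x`.
  let t := r - a / x
  have ht_nonpos : t ≤ 0 := sub_nonpos.mpr ((le_div_iff₀ hx).mpr hxa)
  have ht_lt : t < r := ht_nonpos.trans_lt hr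
  have exponent_eq : -t * x = (1 - r * x / a) * a := by
    simp only [t]
    field_simp
    ring
  have rate_ratio : r / (r - t) = r * x / a := by rw [sub_sub_cancel, div_div_eq_mul_div]
  calc cdf (gammaMeasure a r) x
      = (gammaMeasure a r).real {y | id y ≤ x} := cdf_eq_real _ x
    _ ≤ exp (-t * x) * mgf id (gammaMeasure a r) t :=
      measure_le_le_exp_mul_mgf x ht_nonpos (integrable_exp_mul_gammaMeasure ha hr ht_lt)
    _ = exp ((1 - r * x / a) * a) * (r * x / a) ^ a := by
      rw [mgf_id_gammaMeasure ha hr ht_lt, exponent_eq, rate_ratio]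
    _ = (r * x / a * exp (1 - r * x / a)) ^ a := by
      rw [mul_rpow (by positivity) (exp_pos _).le, ← exp_mul, mul_comm]

end Gamma

lemma chiSqMeasure_eq_gammaMeasure (k : ℕ) : chiSqMeasure k = gammaMeasure (k / 2) (1 / 2) := by
  rw [chiSqMeasure, gammaMeasure, ← withDensity_indicator measurableSet_Ici]
  congr with x
  have two_rpow : (2 : ℝ) ^ (-(k : ℝ) / 2) = (1 / 2) ^ ((k : ℝ) / 2) := by
    rw [one_div, inv_rpow zero_le_two, ← rpow_neg zero_le_two, neg_div]
  by_cases hx : 0 ≤ x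
  · rw [Set.indicator_of_mem (Set.mem_Ici.mpr hx), gammaPDF_of_nonneg hx, two_rpow]
    ring_nf
  · rw [Set.indicator_of_notMem (by simpa using hx), gammaPDF_of_neg (not_le.mp hx)]

lemma chiSqCDF_eq_cdf_gammaMeasure {k : ℕ} (hk : 0 < k) (t : ℝ) :
    chiSqCDF k t = cdf (gammaMeasure (k / 2) (1 / 2)) t := by
  have : IsProbabilityMeasure (gammaMeasure (k / 2) (1 / 2)) :=
    isProbabilityMeasure_gammaMeasure (by positivity) one_half_pos
  rw [chiSqCDF, chiSqMeasure_eq_gammaMeasure, cdf_eq_real, measureReal_def]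

lemma mul_exp_one_sub_rpow_lt {z a : ℝ} (hz : 0 < z) (ha : 0 < a) :
    (z * exp (1 - z)) ^ a < (exp 1 * z) ^ a := by
  have exp_lt : exp (1 - z) < exp 1 := exp_lt_exp.mpr (sub_lt_self 1 hz)
  rw [mul_comm z]
  gcongr

theorem chiSqCDF_bound_general (k : ℕ) (δ : ℝ) (hδ : 0 < δ) (hδk : δ ≤ k) :
    chiSqCDF k δ ≤ (δ / k * exp (1 - δ / k)) ^ ((k : ℝ) / 2) ∧
    (δ / k * exp (1 - δ / k)) ^ ((k : ℝ) / 2) < (exp 1 * δ / k) ^ ((k : ℝ) / 2) := by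
  have hk : (0 : ℝ) < k := hδ.trans_le hδk
  constructor
  · have chernoff := cdf_gammaMeasure_le (half_pos hk) one_half_pos hδ (by linarith)
    have mean_ratio : 1 / 2 * δ / (k / 2) = δ / k := by field_simp
    rwa [mean_ratio, ← chiSqCDF_eq_cdf_gammaMeasure (Nat.cast_pos.mp hk)] at chernoff
  · rw [mul_div_assoc]
    exact mul_exp_one_sub_rpow_lt (div_pos hδ hk) (half_pos hk)

/-- For `k ≥ 1` and `0 < δ < 1`, with `z = δ/k` one has
`F_{χ²_k}(δ) ≤ (z e^{1-z})^{k/2} < (eδ/k)^{k/2}`. -/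
theorem chiSqCDF_bound (k : ℕ) (hk : 1 ≤ k) (δ : ℝ) (hδ0 : 0 < δ) (hδ1 : δ < 1) :
    chiSqCDF k δ ≤ (δ / k * Real.exp (1 - δ / k)) ^ ((k : ℝ) / 2) ∧
    (δ / k * Real.exp (1 - δ / k)) ^ ((k : ℝ) / 2) <
      (Real.exp 1 * δ / k) ^ ((k : ℝ) / 2) :=
  chiSqCDF_bound_general k δ hδ0 (hδ1.le.trans (Nat.one_le_cast.mpr hk))
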